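/- arXiv:1708.03403 — 3 statements merged into one kernel-verified Lean document; each statement's English description precedes it below -/
import Mathlib

section
/- Neither the unimodal spi-logic axiomatised by {e_wcon} nor the unimodal spi-logic SPi_lin axiomatised by Ec_lin = {e_refl, e_trans, e_wcon} is complex: there is a finite SLO validating every member of Ec_lin (hence validating e_wcon) that admits no sp-embedding into F* for any frame F validating e_wcon (in particular, for no frame validating Ec_lin). -/
/-- Strictly positive modal formulas over a signature `Sig`:
propositional variables, `⊤`, conjunction, and a diamond `◇_r` for each `r : Sig`. -/
inductive SP (Sig : Type) : Type
  | var : ℕ → SP Sig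
  | top : SP Sig
  | and : SP Sig → SP Sig → SP Sig
  | dia : Sig → SP Sig → SP Sig

/-- An sp-implication `σ → τ` is a pair of sp-formulas. -/
abbrev SPImp (Sig : Type) := SP Sig × SP Sig

/-- A SLO of signature `Sig`: a meet-semilattice with a greatest element,
equipped with a monotone unary operator for each element of the signature. -/
structure SLO (Sig : Type) where
  carrier : Type
  [instInf : SemilatticeInf carrier]
  [instTop : OrderTop carrier]
  dia : Sig → carrier → carrier
  mono : ∀ r : Sig, Monotone (dia r)

attribute [instance] SLO.instInf SLO.instTop

namespace SLO

variable {Sig : Type}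

/-- Evaluation of an sp-formula in a SLO under a valuation of the variables. -/
def eval (A : SLO Sig) (v : ℕ → A.carrier) : SP Sig → A.carrier
  | .var n => v n
  | .top => ⊤
  | .and φ ψ => eval A v φ ⊓ eval A v ψ
  | .dia r φ => A.dia r (eval A v φ)

/-- A SLO validates an sp-implication `σ → τ` if under every valuation
the value of `σ` is below the value of `τ`. -/
def Valid (A : SLO Sig) (ι : SPImp Sig) : Prop :=
  ∀ v : ℕ → A.carrier, eval A v ι.1 ≤ eval A v ι.2

/-- A SLO validates a set of sp-implications. -/
def ValidSet (A : SLO Sig) (Ax : Set (SPImp Sig)) : Prop :=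
  ∀ ι ∈ Ax, Valid A ι

end SLO

/-- A Kripke frame: a nonempty type of worlds with a binary accessibility
relation for each element of the signature. -/
structure KFrame (Sig : Type) where
  world : Type
  [instNonempty : Nonempty world]
  rel : Sig → world → world → Prop

attribute [instance] KFrame.instNonempty

namespace KFrame

variable {Sig : Type}

/-- Truth of an sp-formula at a world of a Kripke model `(F, v)`. -/
def truth (F : KFrame Sig) (v : ℕ → Set F.world) : SP Sig → F.world → Prop
  | .var n, w => w ∈ v n
  | .top, _ => True
  | .and φ ψ, w => truth F v φ w ∧ truth F v ψ w
  | .dia r φ, w => ∃ u, F.rel r w u ∧ truth F v φ u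

/-- A frame validates an sp-implication `σ → τ` if in every Kripke model on it,
at every world, truth of `σ` implies truth of `τ`. -/
def Valid (F : KFrame Sig) (ι : SPImp Sig) : Prop :=
  ∀ (v : ℕ → Set F.world) (w : F.world), truth F v ι.1 w → truth F v ι.2 w

/-- A frame validates a set of sp-implications. -/
def ValidSet (F : KFrame Sig) (Ax : Set (SPImp Sig)) : Prop :=
  ∀ ι ∈ Ax, Valid F ι

/-- The complex algebra `F*` of a frame, as a SLO: all subsets of the worlds,
with intersection as meet, the whole set as `⊤`, and
`◇_r X = {w | ∃ u ∈ X, rel r w u}`. -/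
def cmpl (F : KFrame Sig) : SLO Sig where
  carrier := Set F.world
  dia r X := {w | ∃ u ∈ X, F.rel r w u}
  mono r := by
    intro X Y hXY w hw
    obtain ⟨u, hu, hr⟩ := hw
    exact ⟨u, hXY hu, hr⟩

end KFrame

/-- An sp-embedding between SLOs: an injective map preserving `⊤`,
binary meets, and each operator. -/
def IsSpEmbedding {Sig : Type} (A B : SLO Sig) (η : A.carrier → B.carrier) : Prop :=
  Function.Injective η ∧ η ⊤ = ⊤ ∧
    (∀ a b : A.carrier, η (a ⊓ b) = η a ⊓ η b) ∧
    ∀ (r : Sig) (a : A.carrier), η (A.dia r a) = B.dia r (η a)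

/-- `Ax ⊨_Kr ι`: every frame validating every member of `Ax` validates `ι`. -/
def KrCons {Sig : Type} (Ax : Set (SPImp Sig)) (ι : SPImp Sig) : Prop :=
  ∀ F : KFrame Sig, F.ValidSet Ax → F.Valid ι

/-- `Ax ⊨_SLO ι`: every SLO validating every member of `Ax` validates `ι`. -/
def SLOCons {Sig : Type} (Ax : Set (SPImp Sig)) (ι : SPImp Sig) : Prop :=
  ∀ A : SLO Sig, A.ValidSet Ax → A.Valid ι

/-- The spi-logic axiomatised by `Ax` is complete:
`Ax ⊨_Kr ι` iff `Ax ⊨_SLO ι` for every sp-implication `ι`. -/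
def IsCompleteLogic {Sig : Type} (Ax : Set (SPImp Sig)) : Prop :=
  ∀ ι : SPImp Sig, KrCons Ax ι ↔ SLOCons Ax ι

/-- The spi-logic axiomatised by `Ax` is complex: every SLO validating every
member of `Ax` sp-embeds into the complex algebra of some frame validating
every member of `Ax`. -/
def IsComplexLogic {Sig : Type} (Ax : Set (SPImp Sig)) : Prop :=
  ∀ A : SLO Sig, A.ValidSet Ax →
    ∃ F : KFrame Sig, F.ValidSet Ax ∧
      ∃ η : A.carrier → (KFrame.cmpl F).carrier, IsSpEmbedding A (KFrame.cmpl F) η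

/-- The unimodal diamond. -/
def SP.d (φ : SP Unit) : SP Unit := SP.dia () φ

/-- `p → ◇p` (reflexivity). -/
def e_refl : SPImp Unit := (SP.var 0, (SP.var 0).d)

/-- `◇◇p → ◇p` (transitivity). -/
def e_trans : SPImp Unit := (((SP.var 0).d).d, (SP.var 0).d)

/-- `q ∧ ◇p → ◇(p ∧ ◇q)` (symmetry). -/
def e_sym : SPImp Unit :=
  ((SP.var 1).and ((SP.var 0).d), ((SP.var 0).and ((SP.var 1).d)).d)

/-- `◇(p ∧ q) ∧ ◇(p ∧ r) → ◇(p ∧ ◇q ∧ ◇r)` (weak connectedness). -/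
def e_wcon : SPImp Unit :=
  ((((SP.var 0).and (SP.var 1)).d).and (((SP.var 0).and (SP.var 2)).d),
   ((SP.var 0).and (((SP.var 1).d).and ((SP.var 2).d))).d)

/-
Complex algebras are distributive lattices, and in a complex algebra validating `e_wcon` taking
`p := a ∪ b` yields the rule: if `a ∧ ◇b ≤ c` and `b ∧ ◇a ≤ c`, then `◇a ∧ ◇b ≤ ◇c`. This rule
is inherited by every SLO that sp-embeds into such an algebra.

In the complex algebra of a preorder, `◇` is the lower closure, and `e_wcon` can only fail at `x`
for some `p` that omits `x` but contains two distinct points above `x`. The sets `p` for which this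
never happens form a sub-SLO, which therefore validates `Ec_lin`. It contains all singletons, so if
`a` and `b` are incomparable with a common lower bound, then `{a}`, `{b}` and `c = ∅` refute
the rule.
-/

open Set

namespace SLO

theorem valid_e_refl_iff {A : SLO Unit} : A.Valid e_refl ↔ ∀ a, a ≤ A.dia () a :=
  ⟨fun h a ↦ h fun _ ↦ a, fun h v ↦ h (v 0)⟩

theorem valid_e_trans_iff {A : SLO Unit} :
    A.Valid e_trans ↔ ∀ a, A.dia () (A.dia () a) ≤ A.dia () a :=
  ⟨fun h a ↦ h fun _ ↦ a, fun h v ↦ h (v 0)⟩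

theorem valid_e_wcon_iff {A : SLO Unit} :
    A.Valid e_wcon ↔ ∀ p q r, A.dia () (p ⊓ q) ⊓ A.dia () (p ⊓ r) ≤
      A.dia () (p ⊓ (A.dia () q ⊓ A.dia () r)) :=
  ⟨fun h p q r ↦ h fun | 0 => p | 1 => q | _ => r, fun h v ↦ h (v 0) (v 1) (v 2)⟩

theorem dia_inf_dia_le_dia_of_le {A : SLO Unit} (hA : A.Valid e_wcon) {a b c s : A.carrier}
    (has : a ≤ s) (hbs : b ≤ s) (hsc : s ⊓ (A.dia () a ⊓ A.dia () b) ≤ c) :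
    A.dia () a ⊓ A.dia () b ≤ A.dia () c :=
  calc A.dia () a ⊓ A.dia () b
      = A.dia () (s ⊓ a) ⊓ A.dia () (s ⊓ b) := by
        rw [inf_eq_right.2 has, inf_eq_right.2 hbs]
    _ ≤ A.dia () (s ⊓ (A.dia () a ⊓ A.dia () b)) := valid_e_wcon_iff.1 hA s a b
    _ ≤ A.dia () c := A.mono () hsc

end SLO

namespace KFrame

theorem setOf_truth_eq_eval_cmpl {Sig : Type} (F : KFrame Sig) (v : ℕ → Set F.world) (φ : SP Sig) :
    {w | F.truth v φ w} = F.cmpl.eval v φ := by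
  induction φ with
  | var n => rfl
  | top => exact eq_univ_of_forall fun _ ↦ trivial
  | and φ ψ ihφ ihψ => exact congrArg₂ (· ∩ ·) ihφ ihψ
  | dia r φ ih =>
    have hih : F.cmpl.dia r {w | F.truth v φ w} = F.cmpl.eval v (.dia r φ) :=
      congrArg (F.cmpl.dia r) ih
    exact Eq.trans (ext fun _ ↦ exists_congr fun _ ↦ and_comm) hih

theorem cmpl_valid_iff {Sig : Type} {F : KFrame Sig} {ι : SPImp Sig} :
    F.cmpl.Valid ι ↔ F.Valid ι :=
  forall_congr' fun v ↦ by
    rw [← F.setOf_truth_eq_eval_cmpl v ι.1, ← F.setOf_truth_eq_eval_cmpl v ι.2]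
    rfl

theorem dia_inf_dia_le_dia {F : KFrame Unit} (hF : F.Valid e_wcon) {a b c : F.cmpl.carrier}
    (hab : a ⊓ F.cmpl.dia () b ≤ c) (hba : b ⊓ F.cmpl.dia () a ≤ c) :
    F.cmpl.dia () a ⊓ F.cmpl.dia () b ≤ F.cmpl.dia () c := by
  refine SLO.dia_inf_dia_le_dia_of_le (cmpl_valid_iff.2 hF) (s := (a ∪ b : Set F.world))
    subset_union_left subset_union_right ?_
  rintro w ⟨hwa | hwb, hwda, hwdb⟩
  · exact hab ⟨hwa, hwdb⟩
  · exact hba ⟨hwb, hwda⟩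

end KFrame

namespace IsSpEmbedding

theorem le_iff_le {Sig : Type} {A B : SLO Sig} {η : A.carrier → B.carrier}
    (hη : IsSpEmbedding A B η) {a b : A.carrier} : η a ≤ η b ↔ a ≤ b := by
  obtain ⟨hinj, -, hinf, -⟩ := hη
  rw [← inf_eq_left, ← hinf, hinj.eq_iff, inf_eq_left]

theorem dia_inf_dia_le_dia {A : SLO Unit} {F : KFrame Unit} {η : A.carrier → F.cmpl.carrier}
    (hη : IsSpEmbedding A F.cmpl η) (hF : F.Valid e_wcon) {a b c : A.carrier}
    (hab : a ⊓ A.dia () b ≤ c) (hba : b ⊓ A.dia () a ≤ c) :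
    A.dia () a ⊓ A.dia () b ≤ A.dia () c := by
  have ⟨_, _, hinf, hdia⟩ := hη
  rw [← hη.le_iff_le, hinf, hdia] at hab hba ⊢
  rw [hdia, hdia]
  exact KFrame.dia_inf_dia_le_dia hF hab hba

end IsSpEmbedding

theorem not_isComplexLogic_of_forall_not_isSpEmbedding {Sig : Type} {A : SLO Sig}
    {Ax : Set (SPImp Sig)} {ι : SPImp Sig} (hA : A.ValidSet Ax) (hι : ι ∈ Ax)
    (hemb : ∀ F : KFrame Sig, F.Valid ι → ∀ η, ¬ IsSpEmbedding A F.cmpl η) :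
    ¬ IsComplexLogic Ax := by
  intro hAx
  obtain ⟨F, hF, η, hη⟩ := hAx A hA
  exact hemb F (hF ι hι) η hη

/-- A set in a preorder is unforked if no point outside it lies below two distinct points of it.
For such sets `p`, every instance of `e_wcon` holds in the complex algebra of the preorder. -/
def IsUnforked {α : Type*} [Preorder α] (p : Set α) : Prop :=
  ∀ x ∉ p, (p ∩ Ici x).Subsingleton

namespace IsUnforked

variable {α : Type*} [Preorder α]

theorem of_subsingleton {p : Set α} (hp : p.Subsingleton) : IsUnforked p :=
  fun _ _ ↦ hp.anti inter_subset_left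

theorem of_isLowerSet {p : Set α} (hp : IsLowerSet p) : IsUnforked p :=
  fun _ hx _ hy ↦ absurd (hp hy.2 hy.1) hx

theorem inter {p q : Set α} (hp : IsUnforked p) (hq : IsUnforked q) : IsUnforked (p ∩ q) := by
  intro x hx
  rcases not_and_or.1 hx with hxp | hxq
  · exact (hp x hxp).anti (inter_subset_inter_left _ inter_subset_left)
  · exact (hq x hxq).anti (inter_subset_inter_left _ inter_subset_right)

theorem lowerClosure_inter_subset {p : Set α} (hp : IsUnforked p) (q r : Set α) :
    (lowerClosure (p ∩ q) ∩ lowerClosure (p ∩ r) : Set α) ⊆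
      lowerClosure (p ∩ (lowerClosure q ∩ lowerClosure r)) := by
  rintro x ⟨⟨y, ⟨hyp, hyq⟩, hxy⟩, ⟨z, ⟨hzp, hzr⟩, hxz⟩⟩
  by_cases hxp : x ∈ p
  · exact ⟨x, ⟨hxp, ⟨y, hyq, hxy⟩, ⟨z, hzr, hxz⟩⟩, le_rfl⟩
  · obtain rfl : y = z := hp x hxp ⟨hyp, hxy⟩ ⟨hzp, hxz⟩
    exact ⟨y, ⟨hyp, subset_lowerClosure hyq, subset_lowerClosure hzr⟩, hxy⟩

end IsUnforked

/-- The SLO of unforked sets of a preorder: a sub-SLO of the complex algebra of the frame whose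
relation is `≤`, with `◇` the lower closure. -/
def unforkedSLO (α : Type) [Preorder α] : SLO Unit where
  carrier := {p : Set α // IsUnforked p}
  instInf := Subtype.semilatticeInf fun _ _ ↦ IsUnforked.inter
  instTop := Subtype.orderTop (IsUnforked.of_isLowerSet isLowerSet_univ)
  dia _ p := ⟨lowerClosure p.1, IsUnforked.of_isLowerSet (LowerSet.lower _)⟩
  mono _ _ _ hpq := lowerClosure_mono hpq

namespace unforkedSLO

variable {α : Type} [Preorder α]

theorem finite_carrier [Finite α] : Finite (unforkedSLO α).carrier :=
  inferInstanceAs (Finite {p : Set α // IsUnforked p})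

theorem valid_e_refl : (unforkedSLO α).Valid e_refl :=
  SLO.valid_e_refl_iff.2 fun _ ↦ subset_lowerClosure

theorem valid_e_trans : (unforkedSLO α).Valid e_trans :=
  SLO.valid_e_trans_iff.2 fun p ↦ (LowerSet.lowerClosure (lowerClosure p.1)).le

theorem valid_e_wcon : (unforkedSLO α).Valid e_wcon :=
  SLO.valid_e_wcon_iff.2 fun p q r ↦ p.2.lowerClosure_inter_subset q.1 r.1

theorem not_isSpEmbedding_cmpl {x a b : α} (hxa : x ≤ a) (hxb : x ≤ b)
    (hab : IncompRel (· ≤ ·) a b) {F : KFrame Unit} (hF : F.Valid e_wcon)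
    (η : (unforkedSLO α).carrier → F.cmpl.carrier) :
    ¬ IsSpEmbedding (unforkedSLO α) F.cmpl η := by
  intro hη
  let point (y : α) : (unforkedSLO α).carrier :=
    ⟨{y}, IsUnforked.of_subsingleton subsingleton_singleton⟩
  let empty : (unforkedSLO α).carrier := ⟨∅, IsUnforked.of_subsingleton subsingleton_empty⟩
  have disjoint_of_not_le {y z : α} (hyz : ¬ y ≤ z) :
      point y ⊓ (unforkedSLO α).dia () (point z) ≤ empty := by
    rintro _ ⟨rfl, _, rfl, hle⟩
    exact hyz hle
  have hx : x ∈ lowerClosure (∅ : Set α) :=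
    hη.dia_inf_dia_le_dia hF (disjoint_of_not_le hab.1) (disjoint_of_not_le hab.2)
      ⟨⟨a, rfl, hxa⟩, ⟨b, rfl, hxb⟩⟩
  rwa [lowerClosure_empty] at hx

end unforkedSLO

/-- Neither the unimodal spi-logic axiomatised by `{e_wcon}` nor
`SPi_lin` (axiomatised by `Ec_lin = {e_refl, e_trans, e_wcon}`) is complex:
there is a finite SLO validating every member of `Ec_lin` that admits no
sp-embedding into `F*` for any frame validating `e_wcon`. -/
theorem stmt16 :
    ¬ IsComplexLogic ({e_wcon} : Set (SPImp Unit)) ∧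
    ¬ IsComplexLogic ({e_refl, e_trans, e_wcon} : Set (SPImp Unit)) ∧
    ∃ A : SLO Unit, Finite A.carrier ∧
      A.ValidSet ({e_refl, e_trans, e_wcon} : Set (SPImp Unit)) ∧
      ∀ F : KFrame Unit, F.Valid e_wcon →
        ∀ η : A.carrier → (KFrame.cmpl F).carrier, ¬ IsSpEmbedding A (KFrame.cmpl F) η := by
  have hlin : (unforkedSLO (Bool × Bool)).ValidSet {e_refl, e_trans, e_wcon} := by
    rintro ι (rfl | rfl | rfl)
    exacts [unforkedSLO.valid_e_refl, unforkedSLO.valid_e_trans, unforkedSLO.valid_e_wcon]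
  have hwcon : (unforkedSLO (Bool × Bool)).ValidSet {e_wcon} := by
    rintro ι rfl
    exact unforkedSLO.valid_e_wcon
  have hincomp : IncompRel (· ≤ ·) (true, false) (false, true) := by decide
  have hemb (F : KFrame Unit) (hF : F.Valid e_wcon) (η) :
      ¬ IsSpEmbedding (unforkedSLO (Bool × Bool)) F.cmpl η :=
    unforkedSLO.not_isSpEmbedding_cmpl (bot_le (a := (true, false))) bot_le hincomp hF η
  exact ⟨not_isComplexLogic_of_forall_not_isSpEmbedding hwcon (by simp) hemb,
    not_isComplexLogic_of_forall_not_isSpEmbedding hlin (by simp) hemb,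
    unforkedSLO (Bool × Bool), unforkedSLO.finite_carrier, hlin, hemb⟩
end

section
/- For every n ≥ 2, Ec_qo ∪ {e_funⁿ} ⊭_SLO e_depthⁿ: there is a (finite) SLO validating every member of Ec_qo ∪ {e_funⁿ} that does not validate e_depthⁿ. (Since every frame validating Ec_qo ∪ {e_funⁿ} validates e_depthⁿ, this shows the unimodal spi-logic axiomatised by Ec_qo ∪ {e_funⁿ} is not complete.) -/
/-- Conjunction of a list of variables (with a final `⊤`). -/
def conjVarsList : List ℕ → SP Unit
  | [] => SP.top
  | n :: L => (SP.var n).and (conjVarsList L)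

/-- The conjunction `⋀ Q` of a finite set of variables. -/
def conjVars (Q : Finset ℕ) : SP Unit := conjVarsList (Q.sort (· ≤ ·))

/-- Conjunction of a list of sp-formulas (with a final `⊤`). -/
def conjSP : List (SP Unit) → SP Unit
  | [] => SP.top
  | φ :: L => φ.and (conjSP L)

/-- `e_funⁿ`: the sp-implication
`⋀_{Q ⊆ {p₀,…,pₙ}, |Q| = n} ◇(⋀ Q) → ◇(p₀ ∧ ⋯ ∧ pₙ)`. -/
noncomputable def eFun (n : ℕ) : SPImp Unit :=
  (conjSP ((((Finset.range (n + 1)).powersetCard n).toList).map fun Q => (conjVars Q).d),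
   (conjVars (Finset.range (n + 1))).d)

/-- `depthPair k = (σ_k, τ_k)` for `k ≥ 1`, where `σ₁ = ◇p`, `τ₁ = ◇q`,
`σ_k = ◇(p ∧ τ_{k-1})` and `τ_k = ◇(q ∧ σ_{k-1})` (with `p = var 0`, `q = var 1`). -/
def depthPair : ℕ → SP Unit × SP Unit
  | 0 => (SP.top, SP.top)
  | 1 => ((SP.var 0).d, (SP.var 1).d)
  | k + 2 => (((SP.var 0).and (depthPair (k + 1)).2).d,
              ((SP.var 1).and (depthPair (k + 1)).1).d)

/-- `e_depthⁿ`: the sp-implication `p ∧ τₙ → τ_{n+1}`. -/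
def eDepth (n : ℕ) : SPImp Unit :=
  ((SP.var 0).and (depthPair n).2, (depthPair (n + 1)).2)

/-!
If a frame validates `e_funⁿ`, then no world sees `n + 1` distinct worlds. In a quasi-order
validating `e_funⁿ`, a path with `n + 1` worlds labelled alternately by `p` and `q` meets some world
twice; that world lies in a cluster with its successor on the path, and one can alternate between
the two as long as one likes. This gives `e_depthⁿ`.

A SLO need not contain every set of worlds. In a linear order whose points carry at most `n`
colours, consider the sets that are downward closed within each colour. Of `n + 1` witnesses for the
antecedent of `e_funⁿ` two have the same colour, and the smaller one witnesses the consequent; so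
these sets form a SLO validating `e_funⁿ`. Colouring the chain `0 < ⋯ < n` by parity, the two
colour classes are admissible values of `p` and `q`, and they refute `e_depthⁿ` because an
alternating path from `0` climbs by at least one at every step.
-/

theorem rel_of_forall_lt_rel_succ {α : Type*} {r : α → α → Prop} (hrefl : ∀ x, r x x)
    (htrans : ∀ x y z, r x y → r y z → r x z) {f : ℕ → α} {n : ℕ}
    (hf : ∀ i < n, r (f i) (f (i + 1))) {i j : ℕ} (hij : i ≤ j) (hj : j ≤ n) :
    r (f i) (f j) := by
  induction j, hij using Nat.le_induction with
  | base => exact hrefl _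
  | succ j _ ih => exact htrans _ _ _ (ih (by omega)) (hf j hj)

theorem mem_powersetCard_iff_exists_erase {α : Type*} [DecidableEq α] {s t : Finset α} {n : ℕ}
    (hs : s.card = n + 1) : t ∈ s.powersetCard n ↔ ∃ a ∈ s, s.erase a = t := by
  rw [Finset.mem_powersetCard]
  constructor
  · rintro ⟨hts, ht⟩
    obtain ⟨a, hat, rfl⟩ := Finset.exists_eq_insert_iff.2 ⟨hts, by rw [ht, hs]⟩
    exact ⟨a, Finset.mem_insert_self a t, Finset.erase_insert hat⟩
  · rintro ⟨a, ha, rfl⟩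
    exact ⟨Finset.erase_subset a s, by rw [Finset.card_erase_of_mem ha, hs, Nat.add_sub_cancel]⟩

namespace KFrame

section InternalSets

variable {Sig : Type} {F : KFrame Sig}

/-- A family of sets of worlds containing the whole frame and closed under intersection and the
diamonds: the strictly positive analogue of the internal sets of a general frame. -/
structure InternalSets (F : KFrame Sig) where
  sets : Set (Set F.world)
  univ_mem : Set.univ ∈ sets
  inter_mem : ∀ {X Y}, X ∈ sets → Y ∈ sets → X ∩ Y ∈ sets
  dia_mem : ∀ (r : Sig) {X}, X ∈ sets → {w | ∃ u, F.rel r w u ∧ u ∈ X} ∈ sets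

/-- The SLO of the internal sets, a subalgebra of the complex algebra of the frame. -/
def InternalSets.toSLO (I : F.InternalSets) : SLO Sig where
  carrier := {X // X ∈ I.sets}
  instInf := Subtype.semilatticeInf fun {_ _} hX hY => I.inter_mem hX hY
  instTop := Subtype.orderTop I.univ_mem
  dia r X := ⟨{w | ∃ u, F.rel r w u ∧ u ∈ X.1}, I.dia_mem r X.2⟩
  mono _ _ _ hXY := fun _ ⟨u, hwu, hu⟩ => ⟨u, hwu, hXY hu⟩

theorem InternalSets.mem_eval_toSLO (I : F.InternalSets) (v : ℕ → I.toSLO.carrier) (φ : SP Sig)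
    (w : F.world) : w ∈ (I.toSLO.eval v φ).1 ↔ F.truth (fun i => (v i).1) φ w := by
  induction φ generalizing w with
  | var i => exact Iff.rfl
  | top => exact iff_of_true trivial trivial
  | and φ ψ ihφ ihψ => exact and_congr (ihφ w) (ihψ w)
  | dia r φ ih => exact exists_congr fun u => and_congr_right fun _ => ih u

theorem InternalSets.valid_toSLO_iff (I : F.InternalSets) (ι : SPImp Sig) :
    I.toSLO.Valid ι ↔ ∀ v : ℕ → Set F.world, (∀ i, v i ∈ I.sets) →
      ∀ w, F.truth v ι.1 w → F.truth v ι.2 w := by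
  constructor
  · intro h v hv w hw
    let v' : ℕ → I.toSLO.carrier := fun i => ⟨v i, hv i⟩
    exact (I.mem_eval_toSLO v' ι.2 w).1 (h v' ((I.mem_eval_toSLO v' ι.1 w).2 hw))
  · intro h v w hw
    exact (I.mem_eval_toSLO v ι.2 w).2
      (h _ (fun i => (v i).2) w ((I.mem_eval_toSLO v ι.1 w).1 hw))

theorem Valid.toSLO {ι : SPImp Sig} (h : F.Valid ι) (I : F.InternalSets) : I.toSLO.Valid ι :=
  (I.valid_toSLO_iff ι).2 fun v _ => h v

end InternalSets

section Truth

variable {F : KFrame Unit}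

theorem valid_e_refl_iff : F.Valid e_refl ↔ ∀ x, F.rel () x x := by
  constructor
  · intro h x
    obtain ⟨_, hxu, rfl⟩ := h (fun _ => {x}) x rfl
    exact hxu
  · exact fun h _ w hw => ⟨w, h w, hw⟩

theorem valid_e_trans_iff :
    F.Valid e_trans ↔ ∀ x y z, F.rel () x y → F.rel () y z → F.rel () x z := by
  constructor
  · intro h x y z hxy hyz
    obtain ⟨_, hxu, rfl⟩ := h (fun _ => {z}) x ⟨y, hxy, z, hyz, rfl⟩
    exact hxu
  · exact fun h _ x ⟨y, hxy, z, hyz, hz⟩ => ⟨z, h x y z hxy hyz, hz⟩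

variable {v : ℕ → Set F.world} {w : F.world}

theorem truth_conjVarsList (L : List ℕ) :
    F.truth v (conjVarsList L) w ↔ ∀ i ∈ L, w ∈ v i := by
  induction L with
  | nil => simp [conjVarsList, truth]
  | cons i L ih => simp [conjVarsList, truth, ih]

theorem truth_conjVars (Q : Finset ℕ) : F.truth v (conjVars Q) w ↔ ∀ i ∈ Q, w ∈ v i := by
  simp [conjVars, truth_conjVarsList]

theorem truth_conjSP (L : List (SP Unit)) :
    F.truth v (conjSP L) w ↔ ∀ φ ∈ L, F.truth v φ w := by
  induction L with
  | nil => simp [conjSP, truth]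
  | cons φ L ih => simp [conjSP, truth, ih]

theorem truth_eFun_fst (n : ℕ) : F.truth v (eFun n).1 w ↔
    ∀ k ≤ n, ∃ u, F.rel () w u ∧ ∀ i ≤ n, i ≠ k → u ∈ v i := by
  have mem_iff (Q : Finset ℕ) :=
    mem_powersetCard_iff_exists_erase (Finset.card_range (n + 1)) (t := Q)
  simp only [eFun, truth_conjSP, List.forall_mem_map, Finset.mem_toList, mem_iff,
    forall_exists_index, and_imp, forall_apply_eq_imp_iff₂, SP.d, truth, truth_conjVars,
    Finset.mem_erase, Finset.mem_range, Nat.lt_succ_iff]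
  grind

theorem truth_eFun_snd (n : ℕ) :
    F.truth v (eFun n).2 w ↔ ∃ u, F.rel () w u ∧ ∀ i ≤ n, u ∈ v i := by
  simp [eFun, SP.d, truth, truth_conjVars]

end Truth

theorem not_injective_of_valid_eFun {F : KFrame Unit} {n : ℕ} (h : F.Valid (eFun n)) {w : F.world}
    {f : Fin (n + 1) → F.world} (hwf : ∀ i, F.rel () w (f i)) : ¬ Function.Injective f := by
  intro hf
  let v : ℕ → Set F.world := fun j => f '' {i | (i : ℕ) ≠ j}
  have antecedent : F.truth v (eFun n).1 w := (truth_eFun_fst n).2 fun k hk =>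
    ⟨f ⟨k, by omega⟩, hwf _, fun i _ hik => ⟨⟨k, by omega⟩, hik.symm, rfl⟩⟩
  obtain ⟨u, -, hu⟩ := (truth_eFun_snd n).1 (h v w antecedent)
  obtain ⟨i, -, rfl⟩ := hu 0 n.zero_le
  obtain ⟨j, hji, hfji⟩ := hu i (by omega)
  exact hji (congrArg Fin.val (hf hfji))

end KFrame

/-- The formula asserting a path of `k` steps whose worlds satisfy the variables `0` and `1`
alternately, starting with the parity of `s`. In the notation of `depthPair`, for `k ≥ 1` it is
`p ∧ τ_k` if `s` is even and `q ∧ σ_k` if `s` is odd. -/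
def altFormula (s : ℕ) : ℕ → SP Unit
  | 0 => SP.var (s % 2)
  | k + 1 => (SP.var (s % 2)).and (altFormula (s + 1) k).d

theorem altFormula_add_two (s k : ℕ) : altFormula (s + 2) k = altFormula s k := by
  induction k generalizing s with
  | zero => simp [altFormula]
  | succ k ih => simp [altFormula, ih (s + 1)]

theorem depthPair_succ (k : ℕ) :
    depthPair (k + 1) = ((altFormula 0 k).d, (altFormula 1 k).d) := by
  induction k with
  | zero => rfl
  | succ k ih => simp [depthPair, ih, altFormula, altFormula_add_two 0]

theorem eDepth_snd (n : ℕ) : (eDepth n).2 = (altFormula 1 n).d := by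
  simp only [eDepth, depthPair_succ]

namespace KFrame

section Alternation

variable {F : KFrame Unit} {v : ℕ → Set F.world}

theorem truth_eDepth_fst (n : ℕ) {w : F.world} :
    F.truth v (eDepth n).1 w ↔ F.truth v (altFormula 0 n) w := by
  cases n with
  | zero => simp [eDepth, depthPair, altFormula, truth]
  | succ n => simp [eDepth, depthPair_succ, altFormula]

theorem mem_of_truth_altFormula {s k : ℕ} {w : F.world} (h : F.truth v (altFormula s k) w) :
    w ∈ v (s % 2) := by
  cases k with
  | zero => exact h
  | succ k => exact h.1

theorem exists_path_of_truth_altFormula {s k : ℕ} {w : F.world}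
    (h : F.truth v (altFormula s k) w) :
    ∃ f : ℕ → F.world, f 0 = w ∧ (∀ i < k, F.rel () (f i) (f (i + 1))) ∧
      ∀ i ≤ k, f i ∈ v ((s + i) % 2) := by
  induction k generalizing s w with
  | zero => exact ⟨fun _ => w, rfl, by simp, by simpa using mem_of_truth_altFormula h⟩
  | succ k ih =>
    obtain ⟨hw, u, hwu, hu⟩ := h
    obtain ⟨f, rfl, hrel, hmem⟩ := ih hu
    refine ⟨fun | 0 => w | i + 1 => f i, rfl, ?_, ?_⟩
    · rintro (_ | i) hi
      · exact hwu
      · exact hrel i (by omega)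
    · rintro (_ | i) hi
      · exact hw
      · simpa only [Nat.add_assoc, Nat.add_comm 1] using hmem i (by omega)

theorem truth_altFormula_of_path {f : ℕ → F.world} {s i k : ℕ}
    (hrel : ∀ j < i, F.rel () (f j) (f (j + 1))) (hmem : ∀ j < i, f j ∈ v ((s + j) % 2))
    (h : F.truth v (altFormula (s + i) k) (f i)) :
    F.truth v (altFormula s (i + k)) (f 0) := by
  induction i generalizing k with
  | zero => simpa using h
  | succ i ih =>
    have step : F.truth v (altFormula (s + i) (k + 1)) (f i) :=
      ⟨hmem i i.lt_succ_self, f (i + 1), hrel i i.lt_succ_self, h⟩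
    simpa only [Nat.add_right_comm, Nat.add_assoc] using
      ih (fun j hj => hrel j (by omega)) (fun j hj => hmem j (by omega)) step

theorem truth_altFormula_of_cluster {s : ℕ} {x y : F.world} (hxy : F.rel () x y)
    (hyx : F.rel () y x) (hx : x ∈ v (s % 2)) (hy : y ∈ v ((s + 1) % 2)) (k : ℕ) :
    F.truth v (altFormula s k) x := by
  induction k generalizing s x y with
  | zero => exact hx
  | succ k ih => exact ⟨hx, y, hxy, ih hyx hxy hy (by rwa [Nat.add_assoc, Nat.add_mod_right])⟩

end Alternation

end KFrame

theorem krCons_eDepth (n : ℕ) :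
    KrCons ({e_refl, e_trans, eFun n} : Set (SPImp Unit)) (eDepth n) := by
  intro F hF v w hw
  have hrefl := KFrame.valid_e_refl_iff.1 (hF e_refl (by simp))
  have htrans := KFrame.valid_e_trans_iff.1 (hF e_trans (by simp))
  obtain ⟨f, rfl, hstep, hmem⟩ :=
    KFrame.exists_path_of_truth_altFormula ((KFrame.truth_eDepth_fst n).1 hw)
  have path_rel {i j : ℕ} : i ≤ j → j ≤ n → F.rel () (f i) (f j) :=
    rel_of_forall_lt_rel_succ hrefl htrans hstep
  obtain ⟨i, j, hij, hj, hfij⟩ : ∃ i j, i < j ∧ j ≤ n ∧ f i = f j := by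
    have not_injective : ¬ Function.Injective fun i : Fin (n + 1) => f i :=
      KFrame.not_injective_of_valid_eFun (hF (eFun n) (by simp))
        fun i => path_rel i.1.zero_le (by omega)
    contrapose! not_injective
    exact .of_lt_imp_ne fun i j hij => not_injective i j hij (by omega)
  have back : F.rel () (f (i + 1)) (f i) := hfij ▸ path_rel hij hj
  have alternation : F.truth v (altFormula (0 + i) (n + 1 - i)) (f i) :=
    KFrame.truth_altFormula_of_cluster (hstep i (by omega)) back (hmem i (by omega))
      (hmem (i + 1) (by omega)) _
  have lengthened : F.truth v (altFormula 0 (n + 1)) (f 0) := by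
    rw [show n + 1 = i + (n + 1 - i) by omega]
    exact KFrame.truth_altFormula_of_path (fun j _ => hstep j (by omega))
      (fun j _ => hmem j (by omega)) alternation
  exact (eDepth_snd n).symm ▸ lengthened.2

/-- A preorder as a Kripke frame, each point seeing the points above it. -/
abbrev orderFrame (α : Type) [LE α] [Nonempty α] : KFrame Unit where
  world := α
  rel _ := (· ≤ ·)

/-- The sets of points of a preorder that are downward closed within each class of the
colouring `c`. -/
def colorLowerSets {α : Type} {κ : Type*} [Preorder α] [Nonempty α] (c : α → κ) :
    (orderFrame α).InternalSets where
  sets := {X | ∀ x ∈ X, ∀ y ≤ x, c y = c x → y ∈ X}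
  univ_mem := fun _ _ _ _ _ => trivial
  inter_mem := fun hX hY x hx y hyx hc => ⟨hX x hx.1 y hyx hc, hY x hx.2 y hyx hc⟩
  dia_mem := fun _ _ _ _ ⟨u, hxu, hu⟩ _ hyx _ => ⟨u, hyx.trans hxu, hu⟩

theorem valid_eFun_colorLowerSets {α : Type} {κ : Type*} [LinearOrder α] [Nonempty α] [Finite κ]
    (c : α → κ) {n : ℕ} (hn : Nat.card κ ≤ n) : (colorLowerSets c).toSLO.Valid (eFun n) := by
  rw [KFrame.InternalSets.valid_toSLO_iff]
  intro v hv w hw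
  have witnesses (k : Fin (n + 1)) := (KFrame.truth_eFun_fst n).1 hw k (by omega)
  choose x hwx hx using witnesses
  obtain ⟨k, l, hxkl, hc, hkl⟩ : ∃ k l, x k ≤ x l ∧ c (x k) = c (x l) ∧ k ≠ l := by
    have not_injective : ¬ Function.Injective (c ∘ x) := fun hinj => by
      have card_le : Nat.card (Fin (n + 1)) ≤ Nat.card κ := Nat.card_le_card_of_injective _ hinj
      rw [Nat.card_fin] at card_le
      omega
    obtain ⟨k, l, hc, hkl⟩ := Function.not_injective_iff.1 not_injective
    rcases le_total (x k) (x l) with h | h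
    · exact ⟨k, l, h, hc, hkl⟩
    · exact ⟨l, k, h, hc.symm, hkl.symm⟩
  refine (KFrame.truth_eFun_snd n).2 ⟨x k, hwx k, fun i hi => ?_⟩
  by_cases hik : i = k
  · exact hv i (x l) (hx l i hi (by omega)) (x k) hxkl hc
  · exact hx k i hi hik

/-- The algebra of the chain `0 < ⋯ < n` coloured by parity, which refutes `eDepth n`. -/
def parityAlgebra (n : ℕ) : SLO Unit :=
  (colorLowerSets fun x : Fin (n + 1) => ((x : ℕ) : ZMod 2)).toSLO

theorem finite_parityAlgebra (n : ℕ) : Finite (parityAlgebra n).carrier :=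
  inferInstanceAs (Finite (Subtype (α := Set (Fin (n + 1))) _))

theorem validSet_parityAlgebra {n : ℕ} (hn : 2 ≤ n) :
    (parityAlgebra n).ValidSet ({e_refl, e_trans, eFun n} : Set (SPImp Unit)) := by
  rintro ι (rfl | rfl | rfl)
  · exact (KFrame.valid_e_refl_iff.2 fun _ => le_rfl).toSLO _
  · exact (KFrame.valid_e_trans_iff.2 fun _ _ _ => le_trans).toSLO _
  · exact valid_eFun_colorLowerSets _ (by rwa [Nat.card_zmod])

theorem truth_altFormula_parity {n : ℕ} (s k : ℕ) (x : Fin (n + 1)) :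
    (orderFrame (Fin (n + 1))).truth (fun i => {y | ((y : ℕ) : ZMod 2) = i}) (altFormula s k) x ↔
      ((x : ℕ) : ZMod 2) = s ∧ x + k ≤ n := by
  have mem_label (y : Fin (n + 1)) (i : ℕ) :
      y ∈ {y : Fin (n + 1) | ((y : ℕ) : ZMod 2) = (i % 2 : ℕ)} ↔ (y : ℕ) % 2 = i % 2 := by
    rw [ZMod.natCast_mod]
    exact ZMod.natCast_eq_natCast_iff' _ _ _
  rw [ZMod.natCast_eq_natCast_iff']
  induction k generalizing s x with
  | zero =>
    simp only [altFormula, KFrame.truth, mem_label]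
    omega
  | succ k ih =>
    simp only [altFormula, SP.d, KFrame.truth, mem_label, ih, Fin.le_def]
    constructor
    · rintro ⟨hx, y, hxy, hy, hyk⟩
      omega
    · rintro ⟨hx, hxk⟩
      exact ⟨hx, ⟨x + 1, by omega⟩, by simp, by simp only; omega, by simp only; omega⟩

theorem not_valid_eDepth_parityAlgebra (n : ℕ) : ¬ (parityAlgebra n).Valid (eDepth n) := by
  rw [parityAlgebra, KFrame.InternalSets.valid_toSLO_iff]
  intro h
  have consequent := h (fun i => {y | ((y : ℕ) : ZMod 2) = i})
    (fun _ _ hx _ _ hc => hc.trans hx) 0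
    ((KFrame.truth_eDepth_fst n).2 ((truth_altFormula_parity 0 n 0).2 (by simp)))
  rw [eDepth_snd] at consequent
  obtain ⟨y, -, hy⟩ := consequent
  obtain ⟨hodd, hle⟩ := (truth_altFormula_parity 1 n y).1 hy
  obtain hy0 : (y : ℕ) = 0 := by omega
  simp [hy0] at hodd

/-- For every `n ≥ 2`, `Ec_qo ∪ {e_funⁿ} ⊭_SLO e_depthⁿ`: there is a
finite SLO validating every member of `Ec_qo ∪ {e_funⁿ}` that does not validate
`e_depthⁿ`. Since every frame validating `Ec_qo ∪ {e_funⁿ}` validates `e_depthⁿ`,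
the spi-logic axiomatised by `Ec_qo ∪ {e_funⁿ}` is not complete. -/
theorem stmt18 (n : ℕ) (hn : 2 ≤ n) :
    (∃ A : SLO Unit, Finite A.carrier ∧
      A.ValidSet ({e_refl, e_trans, eFun n} : Set (SPImp Unit)) ∧
      ¬ A.Valid (eDepth n)) ∧
    ¬ SLOCons ({e_refl, e_trans, eFun n} : Set (SPImp Unit)) (eDepth n) ∧
    KrCons ({e_refl, e_trans, eFun n} : Set (SPImp Unit)) (eDepth n) ∧
    ¬ IsCompleteLogic ({e_refl, e_trans, eFun n} : Set (SPImp Unit)) := by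
  have not_sloCons : ¬ SLOCons {e_refl, e_trans, eFun n} (eDepth n) :=
    fun h => not_valid_eDepth_parityAlgebra n (h _ (validSet_parityAlgebra hn))
  exact ⟨⟨parityAlgebra n, finite_parityAlgebra n, validSet_parityAlgebra hn,
    not_valid_eDepth_parityAlgebra n⟩, not_sloCons, krCons_eDepth n,
    fun complete => not_sloCons ((complete _).1 (krCons_eDepth n))⟩
end

section
/- Neither the class of all weakly connected unimodal frames nor the class of all transitive and weakly connected unimodal frames is spi-definable: there is no set Σ of unimodal sp-implications such that the frames validating every member of Σ are exactly the weakly connected frames, and there is no such Σ whose validating frames are exactly the transitive weakly connected frames. -/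
/-- A class of unimodal frames is spi-definable if it consists exactly of the
frames validating every member of some set of sp-implications. -/
def SpiDefinable (C : KFrame Unit → Prop) : Prop :=
  ∃ Ax : Set (SPImp Unit), ∀ F : KFrame Unit, C F ↔ F.ValidSet Ax

/-- A binary relation is weakly connected. -/
def WeaklyConnected {W : Type} (R : W → W → Prop) : Prop :=
  ∀ x y z : W, R x y → R x z → R y z ∨ R z y ∨ y = z

/-!
Products act well on strictly positive formulas: under a rectangular valuation, such a formula
holds at a point of a product frame iff it holds at both coordinates. Let `1 ← 0 → 2` be the fork,
which is not weakly connected, and let `0 < 1 < 2` be the strict three-element chain. The point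
`(0, 1)` of the square of the chain sees exactly `(1, 2)` and `(2, 2)`, so it generates a copy of
the fork. The first projection is injective on this copy, so every valuation of the fork is
induced by a valuation of the first factor together with the everywhere-true valuation of the
second. Hence the fork validates every sp-implication that the chain validates.
-/

namespace KFrame

variable {Sig : Type} {F G H : KFrame Sig}

/-- The direct product of two frames, with the accessibility relations taken coordinatewise. -/
def prod (G H : KFrame Sig) : KFrame Sig where
  world := G.world × H.world
  rel r p q := G.rel r p.1 q.1 ∧ H.rel r p.2 q.2

theorem truth_prod_iff (v : ℕ → Set G.world) (v' : ℕ → Set H.world) (φ : SP Sig)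
    (p : (G.prod H).world) :
    (G.prod H).truth (fun n => v n ×ˢ v' n) φ p ↔ G.truth v φ p.1 ∧ H.truth v' φ p.2 := by
  induction φ generalizing p with
  | var n => exact Iff.rfl
  | top => exact (and_self_iff (a := True)).symm
  | and φ ψ ihφ ihψ => exact (and_congr (ihφ p) (ihψ p)).trans and_and_and_comm
  | dia r φ ih =>
    constructor
    · rintro ⟨q, ⟨hG, hH⟩, hq⟩
      obtain ⟨hqG, hqH⟩ := (ih q).1 hq
      exact ⟨⟨q.1, hG, hqG⟩, ⟨q.2, hH, hqH⟩⟩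
    · rintro ⟨⟨a, hG, ha⟩, ⟨b, hH, hb⟩⟩
      exact ⟨(a, b), ⟨hG, hH⟩, (ih (a, b)).2 ⟨ha, hb⟩⟩

/-- Bounded morphisms of frames (p-morphisms), the maps that preserve and reflect modal truth;
they are not required to be surjective. -/
structure IsBoundedMorphism (F G : KFrame Sig) (f : F.world → G.world) : Prop where
  forth : ∀ {r a b}, F.rel r a b → G.rel r (f a) (f b)
  back : ∀ {r a c}, G.rel r (f a) c → ∃ b, F.rel r a b ∧ f b = c

theorem IsBoundedMorphism.truth_preimage_iff {f : F.world → G.world}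
    (hf : IsBoundedMorphism F G f) (v : ℕ → Set G.world) (φ : SP Sig) (w : F.world) :
    F.truth (fun n => f ⁻¹' v n) φ w ↔ G.truth v φ (f w) := by
  induction φ generalizing w with
  | var n => exact Iff.rfl
  | top => exact Iff.rfl
  | and φ ψ ihφ ihψ => exact and_congr (ihφ w) (ihψ w)
  | dia r φ ih =>
    constructor
    · rintro ⟨u, hwu, hu⟩
      exact ⟨f u, hf.forth hwu, (ih u).1 hu⟩
    · rintro ⟨c, hwc, hc⟩
      obtain ⟨u, hwu, rfl⟩ := hf.back hwc
      exact ⟨u, hwu, (ih u).2 hc⟩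

theorem IsBoundedMorphism.truth_iff_of_injective_fst {f : F.world → G.world}
    {g : F.world → H.world} (hfg : IsBoundedMorphism F (G.prod H) fun w => (f w, g w))
    (hf : Function.Injective f) (v : ℕ → Set F.world) (φ : SP Sig) (w : F.world) :
    F.truth v φ w ↔
      G.truth (fun n => f '' v n) φ (f w) ∧ H.truth (fun _ => Set.univ) φ (g w) := by
  have hv : v = fun n => (fun w => (f w, g w)) ⁻¹' ((f '' v n) ×ˢ Set.univ) := by
    funext n
    rw [Set.mk_preimage_prod, hf.preimage_image, Set.preimage_univ, Set.inter_univ]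
  calc F.truth v φ w
      ↔ F.truth (fun n => (fun w => (f w, g w)) ⁻¹' ((f '' v n) ×ˢ Set.univ)) φ w := by rw [← hv]
    _ ↔ (G.prod H).truth (fun n => (f '' v n) ×ˢ Set.univ) φ (f w, g w) :=
      hfg.truth_preimage_iff _ φ w
    _ ↔ _ := truth_prod_iff _ _ φ _

theorem Valid.of_isBoundedMorphism_prod {ι : SPImp Sig} (hG : G.Valid ι) (hH : H.Valid ι)
    {f : F.world → G.world} {g : F.world → H.world}
    (hfg : IsBoundedMorphism F (G.prod H) fun w => (f w, g w)) (hf : Function.Injective f) :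
    F.Valid ι := by
  intro v w hw
  rw [hfg.truth_iff_of_injective_fst hf] at hw ⊢
  exact hw.imp (hG _ _) (hH _ _)

/-- The fork `1 ← 0 → 2`, a frame that is not weakly connected. -/
abbrev fork : KFrame Unit where
  world := Fin 3
  rel _ a b := a = 0 ∧ b ≠ 0

/-- The irreflexive chain `0 < 1 < 2`, a transitive weakly connected frame. -/
abbrev chain : KFrame Unit where
  world := Fin 3
  rel _ a b := a < b

theorem not_weaklyConnected_fork : ¬ WeaklyConnected (fork.rel ()) := fun h => by
  simpa using h 0 1 2

theorem isBoundedMorphism_fork_chain_prod_chain :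
    IsBoundedMorphism fork (chain.prod chain) fun a => (a, if a = 0 then 1 else 2) where
  forth := by
    rintro - a b ⟨rfl, hb⟩
    simpa [prod, hb] using Fin.pos_of_ne_zero hb
  back := by
    rintro - a ⟨(b : Fin 3), (c : Fin 3)⟩ ⟨hab : a < b, hac : (if a = 0 then 1 else 2) < c⟩
    have ha : a = 0 := by
      by_contra ha
      rw [if_neg ha] at hac
      exact hac.not_ge (Fin.le_last c)
    subst ha
    have hc : c = 2 := by
      rw [if_pos rfl] at hac
      omega
    exact ⟨b, ⟨rfl, hab.ne'⟩, by rw [if_neg hab.ne', hc]⟩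

end KFrame

theorem SpiDefinable.of_isBoundedMorphism_prod {C : KFrame Unit → Prop} (hC : SpiDefinable C)
    {F G H : KFrame Unit} (hG : C G) (hH : C H) {f : F.world → G.world} {g : F.world → H.world}
    (hfg : KFrame.IsBoundedMorphism F (G.prod H) fun w => (f w, g w))
    (hf : Function.Injective f) : C F := by
  obtain ⟨Ax, hAx⟩ := hC
  rw [hAx] at hG hH ⊢
  exact fun ι hι => (hG ι hι).of_isBoundedMorphism_prod (hH ι hι) hfg hf

theorem weaklyConnected_lt {W : Type} [LinearOrder W] :
    WeaklyConnected fun a b : W => a < b :=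
  fun _ y z _ _ => (lt_trichotomy y z).imp_right Or.symm

theorem stmt19_general {C : KFrame Unit → Prop} (hchain : C KFrame.chain)
    (hwc : ∀ F, C F → WeaklyConnected (F.rel ())) : ¬ SpiDefinable C := by
  intro hC
  have hfork : C KFrame.fork := hC.of_isBoundedMorphism_prod hchain hchain
    KFrame.isBoundedMorphism_fork_chain_prod_chain Function.injective_id
  exact KFrame.not_weaklyConnected_fork (hwc _ hfork)

/-- Neither the class of all weakly connected unimodal frames nor
the class of all transitive and weakly connected unimodal frames is spi-definable. -/
theorem stmt19 :
    ¬ SpiDefinable (fun F => WeaklyConnected (F.rel ())) ∧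
    ¬ SpiDefinable (fun F => Transitive (F.rel ()) ∧ WeaklyConnected (F.rel ())) :=
  ⟨stmt19_general weaklyConnected_lt fun _ h => h,
    stmt19_general ⟨fun _ _ _ => lt_trans, weaklyConnected_lt⟩ fun _ h => h.2⟩
end
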